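/- arXiv:2107.11667 — 3 statements merged into one kernel-verified Lean document; each statement's English description precedes it below -/
import Mathlib

section
/- Assume the abstraction relation: for every x ∈ X and every u ∈ U there exists p ∈ P such that for every w ∈ W there exists q ∈ Q with f(x, u, w) = f̂(p, q, x, u, w). Assume π(y) ∈ U for all y ∈ Y. Define the exact backward iteration with the concrete dynamics by X₀^π := D and X_{k+1}^π := {x ∈ X | ∃ y with x ∼ y and ∃ w ∈ W such that f(x, π(y), w) ∈ X_k^π}. Define the under-approximating iteration with the abstract dynamics by any X̲₀^π ⊆ D together with, for each k, a point y̲_{k+1} belonging to Y̲_{k+1} := {y ∈ Y | ∀ u ∈ U, ∃ x with x ∼ y such that ∀ p ∈ P, ∃ w ∈ W, ∀ q ∈ Q, f̂(p, q, x, u, w) ∈ X̲_k^π}, and the set X̲_{k+1}^π := {x ∈ X | x ∼ y̲_{k+1} and ∀ p ∈ P, ∃ w ∈ W, ∀ q ∈ Q, f̂(p, q, x, π(y̲_{k+1}), w) ∈ X̲_k^π}. Then X̲_k^π ⊆ X_k^π for every k ≥ 0. -/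
/-- Proposition (model mismatch): the alternating iteration computed with the abstract
dynamics `fhat` under-approximates the exact backward iteration computed with the
concrete dynamics `f`. -/
theorem stmt_2
    {X Y 𝕌 𝕍 𝕎 P Q : Type*}
    (U : Set 𝕌) (W : Set 𝕎) (V : Set 𝕍)
    (f : X → 𝕌 → 𝕎 → X) (g : X → 𝕍 → Y) (π : Y → 𝕌)
    (fhat : P → Q → X → 𝕌 → 𝕎 → X)
    -- abstraction relation
    (habs : ∀ x : X, ∀ u ∈ U, ∃ p : P, ∀ w ∈ W, ∃ q : Q,
      f x u w = fhat p q x u w)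
    (hπU : ∀ y : Y, π y ∈ U)
    (D : Set X)
    -- exact backward iteration with the concrete dynamics
    (Xe : ℕ → Set X)
    (hXe0 : Xe 0 = D)
    (hXeS : ∀ k, Xe (k + 1) =
      {x | ∃ y, (∃ v ∈ V, g x v = y) ∧ ∃ w ∈ W, f x (π y) w ∈ Xe k})
    -- under-approximating iteration with the abstract dynamics
    (Xb : ℕ → Set X) (yb : ℕ → Y)
    (hXb0 : Xb 0 ⊆ D)
    (hyb : ∀ k, yb (k + 1) ∈
      {y : Y | ∀ u ∈ U, ∃ x, (∃ v ∈ V, g x v = y) ∧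
        ∀ p : P, ∃ w ∈ W, ∀ q : Q, fhat p q x u w ∈ Xb k})
    (hXbS : ∀ k, Xb (k + 1) =
      {x | (∃ v ∈ V, g x v = yb (k + 1)) ∧
        ∀ p : P, ∃ w ∈ W, ∀ q : Q, fhat p q x (π (yb (k + 1))) w ∈ Xb k}) :
    ∀ k, Xb k ⊆ Xe k := by
  intro k
  induction k with
  | zero => exact hXe0 ▸ hXb0
  | succ k ih =>
    intro x hx
    rw [hXbS] at hx
    obtain ⟨hxy, hp⟩ := hx
    -- The parameter `p` matching the concrete dynamics is fixed before `w` is chosen, and `q`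
    -- after it, in the same quantifier order as the condition defining `Xb (k + 1)`.
    obtain ⟨p, hpf⟩ := habs x (π (yb (k + 1))) (hπU _)
    obtain ⟨w, hw, hq⟩ := hp p
    obtain ⟨q, hfq⟩ := hpf w hw
    rw [hXeS]
    refine ⟨yb (k + 1), hxy, w, hw, ih ?_⟩
    rw [hfq]
    exact hq q
end

section
/- Suppose that for every x ∈ X and w ∈ W the map u ↦ f(x, u, w) is continuous from 𝕌 to X, and suppose there exist y ∈ Y, x with x ∼ y, and w ∈ W such that f(x, π(y), w) lies in the topological interior of X̲. Then there exists δ > 0 such that every finite partition {U_i}_{i=1}^n of U (i.e., U = ⋃_{i=1}^n U_i and for every i and all u, u' ∈ U_i one has ‖u − u'‖ ≤ δ) contains a piece U_{i'} for which the set {y ∈ Y | ∀ u ∈ U_{i'}, ∃ x with x ∼ y and ∃ w ∈ W such that f(x, u, w) ∈ X̲} is nonempty. -/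
/-- Proposition (control-set refinement): if `f` is continuous in the control and some
abstract predecessor lands in the interior of `X̲`, then there is a fineness level
`δ > 0` such that every `δ`-fine finite partition of `U` contains a piece `U_{i'}`
whose environment-controllable observation set is nonempty. -/
theorem stmt_5
    {X : Type*} [TopologicalSpace X]
    {𝕌 : Type*} [NormedAddCommGroup 𝕌] [NormedSpace ℝ 𝕌]
    {Y 𝕍 𝕎 : Type*}
    (U : Set 𝕌) (W : Set 𝕎) (V : Set 𝕍)
    (f : X → 𝕌 → 𝕎 → X) (g : X → 𝕍 → Y) (π : Y → 𝕌)
    (hπU : ∀ y : Y, π y ∈ U)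
    (Xlow : Set X)
    (hcont : ∀ (x : X), ∀ w ∈ W, Continuous fun u : 𝕌 => f x u w)
    (hex : ∃ (y : Y) (x : X), (∃ v ∈ V, g x v = y) ∧
      ∃ w ∈ W, f x (π y) w ∈ interior Xlow) :
    ∃ δ > (0 : ℝ), ∀ (n : ℕ) (Ui : Fin n → Set 𝕌),
      U = ⋃ i, Ui i →
      (∀ i, ∀ u ∈ Ui i, ∀ u' ∈ Ui i, ‖u - u'‖ ≤ δ) →
      ∃ i' : Fin n,
        {y : Y | ∀ u ∈ Ui i', ∃ x, (∃ v ∈ V, g x v = y) ∧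
          ∃ w ∈ W, f x u w ∈ Xlow}.Nonempty := by
  obtain ⟨y, x, hxy, w, hw, hf⟩ := hex
  -- The preimage of `interior Xlow` under `u ↦ f x u w` is open and contains `π y`, so it
  -- contains a closed ball around `π y`; its radius is the required fineness.
  obtain ⟨δ, hδ, hball⟩ := Metric.nhds_basis_closedBall.mem_iff.1
    ((isOpen_interior.preimage (hcont x w hw)).mem_nhds hf)
  refine ⟨δ, hδ, fun n Ui hU hfine => ?_⟩
  -- A piece containing `π y` lies in that ball, and `y` is then witnessed by the same `x`, `w`.
  have hy : π y ∈ ⋃ i, Ui i := hU ▸ hπU y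
  obtain ⟨i, hi⟩ := Set.mem_iUnion.1 hy
  refine ⟨i, y, fun u hu => ⟨x, hxy, w, hw, interior_subset (hball ?_)⟩⟩
  exact mem_closedBall_iff_norm.2 (hfine i u hu (π y) hi)
end

section
/- Let U = {G_u θ + c_u | θ ∈ [−1,1]^{N_u}}, W = {G_w θ + c_w | θ ∈ [−1,1]^{N_w}}, V = {G_v θ + c_v | θ ∈ [−1,1]^{N_v}}, and X̲ = {G_x θ + c_x | θ ∈ [−1,1]^{N_x}} be zonotopes in the appropriate Euclidean spaces, and let A, B, E, D, F, K be real matrices/vectors of compatible dimensions. Suppose y̲ is such that for every sign vector θ ∈ {−1,1}^{N_u}, setting u = G_u θ + c_u, there exist x, w ∈ W, and v ∈ V with A x + B u + K + E w ∈ X̲ and x + D u + F v = y̲. Then for every u ∈ U there exist x, w ∈ W, and v ∈ V with A x + B u + K + E w ∈ X̲ and x + D u + F v = y̲; that is, y̲ belongs to {y | ∀ u ∈ U, ∃ x, ∃ w ∈ W, ∃ v ∈ V, A x + B u + K + E w ∈ X̲ and x + D u + F v = y}. -/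
/-!
The feasible parameters `θ`, those for which `u = Gu θ + cu` admits suitable `x`, `w`, `v`,
form a convex set: the constraints are jointly affine in `(θ, x, w, v)` and the zonotopes
`W`, `V`, `X` are convex (`convex_zonotope`), so the witnesses for two parameters can be mixed
with the same weights. This set contains all sign vectors, hence their convex hull, which is
the whole cube `[-1,1]^Nu` (`mem_convexHull_signs`).
-/

/-- A zonotope with generator matrix `G` and center `c`:
the set `{Gθ + c | θ ∈ [−1,1]^N}`. -/
def zonotope {n N : ℕ} (G : Matrix (Fin n) (Fin N) ℝ) (c : Fin n → ℝ) :
    Set (Fin n → ℝ) :=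
  {z | ∃ θ : Fin N → ℝ, (∀ i, |θ i| ≤ 1) ∧ z = G.mulVec θ + c}

theorem convex_zonotope {n N : ℕ} (G : Matrix (Fin n) (Fin N) ℝ) (c : Fin n → ℝ) :
    Convex ℝ (zonotope G c) := by
  rintro _ ⟨θ, hθ, rfl⟩ _ ⟨η, hη, rfl⟩ a b ha hb hab
  refine ⟨a • θ + b • η, fun i => ?_, ?_⟩
  · have h₁ := abs_le.mp (hθ i)
    have h₂ := abs_le.mp (hη i)
    simp only [Pi.add_apply, Pi.smul_apply, smul_eq_mul]
    exact abs_le.mpr ⟨by nlinarith, by nlinarith⟩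
  · obtain rfl : b = 1 - a := by linarith
    rw [Matrix.mulVec_add, Matrix.mulVec_smul, Matrix.mulVec_smul]
    module

/-- The cube `[-1,1]^N` lies in the convex hull of the sign vectors, because the convex hull
commutes with products and `[-1,1]` is the convex hull of `{-1, 1}`. -/
theorem mem_convexHull_signs {N : ℕ} (θ : Fin N → ℝ) (hθ : ∀ i, |θ i| ≤ 1) :
    θ ∈ convexHull ℝ {η : Fin N → ℝ | ∀ i, η i = 1 ∨ η i = -1} := by
  have h : θ ∈ convexHull ℝ (Set.univ.pi fun _ : Fin N => ({-1, 1} : Set ℝ)) := by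
    refine mem_convexHull_pi fun i _ => ?_
    rw [convexHull_pair, segment_eq_Icc (by norm_num)]
    exact abs_le.mp (hθ i)
  refine convexHull_mono (fun η hη i => ?_) h
  exact (hη i (Set.mem_univ i)).symm

/-- Proposition 3 (zonotopic computation of `y̲`): if the feasibility constraints hold
for every control obtained from a sign vector `θ ∈ {−1,1}^{N_u}` (the zonotope
vertices), then they hold for every control `u` in the zonotope `U = ⟨G_u, c_u⟩`. -/
theorem stmt_9
    {n nu nw nv Nu Nw Nv Nx : ℕ}
    (A : Matrix (Fin n) (Fin n) ℝ) (B : Matrix (Fin n) (Fin nu) ℝ)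
    (E : Matrix (Fin n) (Fin nw) ℝ) (D : Matrix (Fin n) (Fin nu) ℝ)
    (F : Matrix (Fin n) (Fin nv) ℝ) (K : Fin n → ℝ)
    (Gu : Matrix (Fin nu) (Fin Nu) ℝ) (cu : Fin nu → ℝ)
    (Gw : Matrix (Fin nw) (Fin Nw) ℝ) (cw : Fin nw → ℝ)
    (Gv : Matrix (Fin nv) (Fin Nv) ℝ) (cv : Fin nv → ℝ)
    (Gx : Matrix (Fin n) (Fin Nx) ℝ) (cx : Fin n → ℝ)
    (yb : Fin n → ℝ)
    (hsign : ∀ θ : Fin Nu → ℝ, (∀ i, θ i = 1 ∨ θ i = -1) →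
      ∃ x : Fin n → ℝ, ∃ w ∈ zonotope Gw cw, ∃ v ∈ zonotope Gv cv,
        A.mulVec x + B.mulVec (Gu.mulVec θ + cu) + K + E.mulVec w
            ∈ zonotope Gx cx ∧
        x + D.mulVec (Gu.mulVec θ + cu) + F.mulVec v = yb) :
    ∀ u ∈ zonotope Gu cu,
      ∃ x : Fin n → ℝ, ∃ w ∈ zonotope Gw cw, ∃ v ∈ zonotope Gv cv,
        A.mulVec x + B.mulVec u + K + E.mulVec w ∈ zonotope Gx cx ∧
        x + D.mulVec u + F.mulVec v = yb := by
  rintro _ ⟨θ, hθ, rfl⟩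
  have hconv : Convex ℝ {θ : Fin Nu → ℝ |
      ∃ x : Fin n → ℝ, ∃ w ∈ zonotope Gw cw, ∃ v ∈ zonotope Gv cv,
        A.mulVec x + B.mulVec (Gu.mulVec θ + cu) + K + E.mulVec w ∈ zonotope Gx cx ∧
        x + D.mulVec (Gu.mulVec θ + cu) + F.mulVec v = yb} := by
    rintro θ₁ ⟨x₁, w₁, hw₁, v₁, hv₁, hx₁, hy₁⟩ θ₂ ⟨x₂, w₂, hw₂, v₂, hv₂, hx₂, hy₂⟩ a b ha hb hab
    refine ⟨a • x₁ + b • x₂, a • w₁ + b • w₂, convex_zonotope Gw cw hw₁ hw₂ ha hb hab,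
      a • v₁ + b • v₂, convex_zonotope Gv cv hv₁ hv₂ ha hb hab, ?_, ?_⟩
    · convert convex_zonotope Gx cx hx₁ hx₂ ha hb hab using 1
      obtain rfl : b = 1 - a := by linarith
      simp only [Matrix.mulVec_add, Matrix.mulVec_smul]
      module
    · have hy : yb = a • yb + b • yb := by rw [← add_smul, hab, one_smul]
      rw [hy]
      nth_rewrite 1 [← hy₁]
      rw [← hy₂]
      obtain rfl : b = 1 - a := by linarith
      simp only [Matrix.mulVec_add, Matrix.mulVec_smul]
      module
  exact convexHull_min hsign hconv (mem_convexHull_signs θ hθ)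
end
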